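/- Let t be a non-source node of a finite directed acyclic graph G with source s, and let n = mincut(s,t). For minimum cuts CUT₁, CUT₂ between s and t, CUT₁ ≤ CUT₂ (CUT₁ separates CUT₂ from s) if and only if there exist n edge-disjoint paths P₁, …, P_n from s to t such that for each i, writing P_i ∩ CUT₁ = {e₁ᵢ} and P_i ∩ CUT₂ = {e₂ᵢ}, the edge e₁ᵢ precedes or equals e₂ᵢ on P_i. -/

import Mathlib

open Finset

/-- Consecutive edges in the list match head-to-tail. -/
def EChain {V E : Type*} (tl hd : E → V) (p : List E) : Prop :=
  p.Chain' (fun d e => hd d = tl e)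

/-- A (nonempty) directed path of edges starting at node `s`. -/
def PathFrom {V E : Type*} (tl hd : E → V) (s : V) (p : List E) : Prop :=
  p ≠ [] ∧ EChain tl hd p ∧ ∀ e ∈ p.head?, tl e = s

/-- The directed graph is acyclic: no nonempty edge-chain returns to its start. -/
def Acyclic {V E : Type*} (tl hd : E → V) : Prop :=
  ∀ p : List E, p ≠ [] → EChain tl hd p →
    ∀ d ∈ p.head?, ∀ e ∈ p.getLast?, hd e ≠ tl d

/-- `B` separates the edge set `A` from `s`: every directed path from `s`
ending with an edge of `A` passes through an edge of `B` (i.e. `B` is a cut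
between `s` and `A`). -/
def Separates {V E : Type*} (tl hd : E → V) (s : V) (A B : Finset E) : Prop :=
  ∀ p : List E, PathFrom tl hd s p → (∃ e ∈ p.getLast?, e ∈ A) → ∃ b ∈ B, b ∈ p

/-- The minimum cut capacity between `s` and the edge set `A`. -/
noncomputable def mincut {V E : Type*} [Fintype E] (tl hd : E → V) (s : V)
    (A : Finset E) : ℕ :=
  sInf {n | ∃ B : Finset E, Separates tl hd s A B ∧ B.card = n}

/-- `B` is a minimum cut between `s` and the edge set `A`. -/
def IsMinCut {V E : Type*} [Fintype E] (tl hd : E → V) (s : V) (A B : Finset E) : Prop :=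
  Separates tl hd s A B ∧ B.card = mincut tl hd s A

/-- An edge set is regular if its cardinality equals its minimum cut capacity from `s`. -/
def Regular {V E : Type*} [Fintype E] (tl hd : E → V) (s : V) (A : Finset E) : Prop :=
  A.card = mincut tl hd s A

/-- `A ∼ A'`: the two edge sets have a common minimum cut from `s`. -/
def EquivSets {V E : Type*} [Fintype E] (tl hd : E → V) (s : V) (A A' : Finset E) : Prop :=
  ∃ C : Finset E, IsMinCut tl hd s A C ∧ IsMinCut tl hd s A' C

/-- `A₁ ≺ A₂`: `|A₁| < |A₂|` and some minimum cut between `s` and `A₂`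
also separates `A₁` from `s`. -/
def Dominates {V E : Type*} [Fintype E] (tl hd : E → V) (s : V) (A₁ A₂ : Finset E) : Prop :=
  A₁.card < A₂.card ∧
    ∃ C : Finset E, IsMinCut tl hd s A₂ C ∧ Separates tl hd s A₁ C

/-- A directed path of edges from node `s` to node `t`. -/
def NPathFromTo {V E : Type*} (tl hd : E → V) (s t : V) (p : List E) : Prop :=
  PathFrom tl hd s p ∧ ∀ e ∈ p.getLast?, hd e = t

/-- `B` is a cut between the nodes `s` and `t`. -/
def NSeparates {V E : Type*} (tl hd : E → V) (s t : V) (B : Finset E) : Prop :=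
  ∀ p : List E, NPathFromTo tl hd s t p → ∃ b ∈ B, b ∈ p

/-- The minimum cut capacity between the nodes `s` and `t`. -/
noncomputable def nmincut {V E : Type*} [Fintype E] (tl hd : E → V) (s t : V) : ℕ :=
  sInf {n | ∃ B : Finset E, NSeparates tl hd s t B ∧ B.card = n}

/-- `B` is a minimum cut between the nodes `s` and `t`. -/
def IsNodeMinCut {V E : Type*} [Fintype E] (tl hd : E → V) (s t : V) (B : Finset E) : Prop :=
  NSeparates tl hd s t B ∧ B.card = nmincut tl hd s t

/-- `d ≤ e` for edges: there is a directed path starting with `d` and ending with `e`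
(in particular `d ≤ d`). -/
def EdgeLe {V E : Type*} (tl hd : E → V) (d e : E) : Prop :=
  ∃ p : List E, EChain tl hd p ∧ p.head? = some d ∧ p.getLast? = some e

/-- A family of pairwise edge-disjoint paths. -/
def EdgeDisjoint {E : Type*} {n : ℕ} (P : Fin n → List E) : Prop :=
  ∀ i j, i ≠ j → List.Disjoint (P i) (P j)

/-- The primary minimum cut between nodes `s` and `t`: a minimum cut separating
every minimum cut between `s` and `t` from `s`. -/
def IsPrimaryNodeMinCut {V E : Type*} [Fintype E] (tl hd : E → V) (s t : V)
    (C : Finset E) : Prop :=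
  IsNodeMinCut tl hd s t C ∧
    ∀ C' : Finset E, IsNodeMinCut tl hd s t C' → Separates tl hd s C' C

/-- The primary minimum cut between `s` and an edge set `A`. -/
def IsPrimaryMinCut {V E : Type*} [Fintype E] (tl hd : E → V) (s : V)
    (A C : Finset E) : Prop :=
  IsMinCut tl hd s A C ∧
    ∀ C' : Finset E, IsMinCut tl hd s A C' → Separates tl hd s C' C

/-- The equivalence class (within the collection `𝒜`) of the wiretap set `A`
under the relation `∼`. -/
def ClassOf {V E : Type*} [Fintype E] (tl hd : E → V) (s : V)
    (𝒜 : Finset (Finset E)) (A : Finset E) : Set (Finset E) :=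
  {A' | A' ∈ 𝒜 ∧ EquivSets tl hd s A A'}

/-- Domination amongst (distinct) equivalence classes: some common minimum cut of all
the sets in `C₂` separates every set in `C₁` from `s`. -/
def ClDominates {V E : Type*} [Fintype E] (tl hd : E → V) (s : V)
    (C₁ C₂ : Set (Finset E)) : Prop :=
  C₁ ≠ C₂ ∧ ∃ CUT : Finset E,
    (∀ A ∈ C₂, IsMinCut tl hd s A CUT) ∧ (∀ A ∈ C₁, Separates tl hd s A CUT)

/-
Edges are the vertices of the line digraph, in which `s`-`t` paths become walks from
`{e | tl e = s}` to `{e | hd e = t}` and edge cuts become vertex separators.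

By Menger's theorem there are `n` disjoint walks, and on each of them every minimum cut has exactly
one edge. If `CUT₁` separates `CUT₂` from `s`, the part of such a walk up to its edge `e₂ ∈ CUT₂`
already meets `CUT₁`, so `e₁ ≤ e₂`. Conversely, extend a path from `s` ending in `e₂ ∈ CUT₂` along
the walk `P i` through `e₂`; the result meets `CUT₁`. If it does so after `e₂`, it does so in the
edge `e₁` of `P i`, and then `e₁ ≤ e₂ ≤ e₁` gives `e₁ = e₂` by acyclicity.

Menger's theorem is proved by Göring's argument, adding one arc `(x, y)` at a time. If a separator
`S` with fewer than `n` vertices appears when the arc is left out, then `S ∪ {x}` and `S ∪ {y}` have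
exactly `n` vertices, and the disjoint walks from `A` to `S ∪ {x}` and from `S ∪ {y}` to `B` given
by induction fit together along `S` and the arc `(x, y)`.
-/

open scoped SetRel Function

section Walks

variable {α : Type*} {R R' : SetRel α α} {A A' B B' : Set α} {X S T : Finset α}
  {a b p q : List α} {u v w x y : α} {n : ℕ}

/-- `p` is the vertex list of a nonempty walk from `A` to `B` in the digraph with arc set `R`.
Vertices may repeat. -/
structure IsWalk (R : SetRel α α) (A B : Set α) (p : List α) : Prop where
  isChain : p.IsChain (· ~[R] ·)
  head_mem : ∃ v ∈ p.head?, v ∈ A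
  getLast_mem : ∃ v ∈ p.getLast?, v ∈ B

/-- The vertex set `S` meets every walk from `A` to `B`. -/
def IsSeparator (R : SetRel α α) (A B : Set α) (S : Finset α) : Prop :=
  ∀ p, IsWalk R A B p → ∃ z ∈ S, z ∈ p

namespace IsWalk

theorem mono (hp : IsWalk R A B p) (hR : R ⊆ R') : IsWalk R' A B p :=
  ⟨hp.isChain.imp fun _ _ h => hR h, hp.head_mem, hp.getLast_mem⟩

theorem reverse (hp : IsWalk R A B p) : IsWalk R.inv B A p.reverse :=
  ⟨List.isChain_reverse.2 hp.isChain, by simpa using hp.getLast_mem, by simpa using hp.head_mem⟩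

theorem left_of_append (hp : IsWalk R A B (a ++ v :: b)) : IsWalk R A {v} (a ++ [v]) :=
  ⟨(List.isChain_split.1 hp.isChain).1, by simpa [List.head?_append] using hp.head_mem, by simp⟩

theorem right_of_append (hp : IsWalk R A B (a ++ v :: b)) : IsWalk R {v} B (v :: b) :=
  ⟨(List.isChain_split.1 hp.isChain).2, by simp, by
    simpa [List.getLast?_append] using hp.getLast_mem⟩

theorem splice (hp : IsWalk R A B' (a ++ [v])) (hq : IsWalk R A' B (v :: b)) :
    IsWalk R A B (a ++ v :: b) :=
  ⟨List.isChain_split.2 ⟨hp.isChain, hq.isChain⟩,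
    by simpa [List.head?_append] using hp.head_mem,
    by simpa [List.getLast?_append] using hq.getLast_mem⟩

theorem append_of_arc (hp : IsWalk R A B' (a ++ [v])) (hq : IsWalk R A' B (w :: b))
    (hvw : v ~[R] w) : IsWalk R A B (a ++ v :: w :: b) :=
  hp.splice (A' := {v}) ⟨List.isChain_cons_cons.2 ⟨hvw, hq.isChain⟩, by simp, by
    simpa using hq.getLast_mem⟩

theorem exists_concat (hp : IsWalk R A B p) : ∃ a, ∃ v ∈ B, p = a ++ [v] := by
  obtain ⟨v, hv, hvB⟩ := hp.getLast_mem
  obtain ⟨a, rfl⟩ := List.getLast?_eq_some_iff.1 hv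
  exact ⟨a, v, hvB, rfl⟩

theorem of_insert (hp : IsWalk (insert (x, y) R) A B (a ++ [v])) (hx : x ∉ a) :
    IsWalk R A B (a ++ [v]) := by
  refine ⟨?_, hp.head_mem, hp.getLast_mem⟩
  refine List.isChain_iff_forall_rel_of_append_cons_cons.2 fun c d l₁ l₂ h => ?_
  obtain hcd | hcd := List.isChain_iff_forall_rel_of_append_cons_cons.1 hp.isChain h
  · obtain ⟨rfl, rfl⟩ := Prod.mk.inj hcd
    have ha : a = l₁ ++ (c :: d :: l₂).dropLast := by
      simpa [List.dropLast_append] using congrArg List.dropLast h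
    simp [ha] at hx
  · exact hcd

theorem exists_first_mem (hp : IsWalk R A B p) (hX : ∃ z ∈ X, z ∈ p) :
    ∃ a, ∃ v ∈ X, IsWalk R A {v} (a ++ [v]) ∧ (∀ u ∈ a, u ∉ X) ∧ a ++ [v] ⊆ p := by
  classical
  obtain ⟨v, hv⟩ : ∃ v, p.find? (· ∈ X) = some v := by
    simpa [← Option.isSome_iff_exists, and_comm] using hX
  obtain ⟨hvX, a, b, rfl, ha⟩ := List.find?_eq_some_iff_append.1 hv
  exact ⟨a, v, by simpa using hvX, hp.left_of_append, by simpa using ha, by simp⟩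

end IsWalk

theorem inv_insert_arc : SetRel.inv (insert (x, y) R) = insert (y, x) R.inv := by
  ext ⟨u, v⟩
  simp [and_comm]

namespace IsSeparator

theorem inv (hS : IsSeparator R A B S) : IsSeparator R.inv B A S := fun p hp => by
  simpa using hS _ hp.reverse

theorem insert_tail [DecidableEq α] (hS : IsSeparator R A B S) :
    IsSeparator (insert (x, y) R) A B (insert x S) := by
  intro p hp
  by_cases hx : x ∈ p
  · exact ⟨x, mem_insert_self x S, hx⟩
  · obtain ⟨a, v, -, rfl⟩ := hp.exists_concat
    obtain ⟨z, hzS, hz⟩ := hS _ (hp.of_insert fun h => hx (List.mem_append_left _ h))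
    exact ⟨z, mem_insert_of_mem hzS, hz⟩

theorem insert_head [DecidableEq α] (hS : IsSeparator R A B S) :
    IsSeparator (insert (x, y) R) A B (insert y S) := by
  simpa [inv_insert_arc] using (hS.inv.insert_tail (x := y) (y := x)).inv

theorem of_tail_mem (hX : IsSeparator (insert (x, y) R) A B X) (hx : x ∈ X)
    (hT : IsSeparator R A X T) : IsSeparator (insert (x, y) R) A B T := by
  intro p hp
  obtain ⟨a, v, hv, ha, haX, hap⟩ := hp.exists_first_mem (hX p hp)
  have hav := ha.of_insert fun h => haX x h hx
  obtain ⟨z, hzT, hz⟩ := hT _ ⟨hav.isChain, hav.head_mem, v, by simp, hv⟩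
  exact ⟨z, hzT, hap hz⟩

theorem of_head_mem (hX : IsSeparator (insert (x, y) R) A B X) (hy : y ∈ X)
    (hT : IsSeparator R X B T) : IsSeparator (insert (x, y) R) A B T := by
  have hX' : IsSeparator (insert (y, x) R.inv) B A X := inv_insert_arc ▸ hX.inv
  simpa [inv_insert_arc] using (hX'.of_tail_mem hy hT.inv).inv

theorem eq_of_mem_of_mem (hS : IsSeparator R A B S) (hp : IsWalk R A {v} (a ++ [v]))
    (ha : ∀ z ∈ a, z ∉ S) (hq : IsWalk R {w} B (w :: b)) (hb : ∀ z ∈ b, z ∉ S)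
    (hup : u ∈ a ++ [v]) (huq : u ∈ w :: b) : v = w := by
  obtain ⟨c, c', hc, hca⟩ : ∃ c c', a ++ [v] = c ++ u :: c' ∧ c ⊆ a := by
    obtain hu | hu := List.mem_append.1 hup
    · obtain ⟨c, c', rfl⟩ := List.append_of_mem hu
      exact ⟨c, c' ++ [v], by simp, by simp⟩
    · exact ⟨a, [], by simp_all, List.Subset.refl a⟩
  obtain ⟨d', d, hd, hdb⟩ : ∃ d' d, w :: b = d' ++ u :: d ∧ d ⊆ b := by
    obtain rfl | hu := List.mem_cons.1 huq
    · exact ⟨[], b, rfl, List.Subset.refl b⟩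
    · obtain ⟨d', d, rfl⟩ := List.append_of_mem hu
      exact ⟨w :: d', d, rfl, by simp⟩
  obtain ⟨z, hzS, hz⟩ := hS _ ((hc ▸ hp).left_of_append.splice (hd ▸ hq).right_of_append)
  obtain rfl : z = u := by
    have hzc : z ∉ c := fun h => ha z (hca h) hzS
    have hzd : z ∉ d := fun h => hb z (hdb h) hzS
    simpa [hzc, hzd] using hz
  have hza : z ∉ a := fun h => ha z h hzS
  have hzb : z ∉ b := fun h => hb z h hzS
  have hzv : z = v := by simpa [hza] using hup
  have hzw : z = w := by simpa [hzb] using huq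
  exact hzv.symm.trans hzw

end IsSeparator

theorem exists_equiv_mem_iff {ι : Type*} [Fintype ι] {P : ι → List α}
    (hP : Pairwise (List.Disjoint on P)) (hT : #T = Fintype.card ι)
    (hPT : ∀ i, ∃ v ∈ T, v ∈ P i) : ∃ e : ι ≃ T, ∀ i (v : T), ↑v ∈ P i ↔ v = e i := by
  choose f hfT hfP using hPT
  have index_eq {i j v} (hi : v ∈ P i) (hj : v ∈ P j) : i = j := by
    by_contra hij
    exact hP hij hi hj
  have hinj : Function.Injective fun i => (⟨f i, hfT i⟩ : T) := fun i j hij =>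
    index_eq (hfP i) (by simpa [Subtype.mk.inj hij] using hfP j)
  have hbij := hinj.bijective_of_nat_card_le (by simp [hT])
  refine ⟨.ofBijective _ hbij, fun i v => ⟨fun hv => ?_, ?_⟩⟩
  · obtain ⟨j, rfl⟩ := hbij.surjective v
    rw [index_eq hv (hfP j)]
    rfl
  · rintro rfl
    exact hfP i

/-- A family of disjoint walks from `A` to `X` in `R`, one for each `v ∈ X`, such that the walk to
`v` meets `X` only at its end. The list `l v` omits this last vertex, and `l v` has no meaning for
`v ∉ X`. -/
structure IsFan (R : SetRel α α) (A : Set α) (X : Finset α) (l : α → List α) : Prop where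
  isWalk : ∀ v ∈ X, IsWalk R A {v} (l v ++ [v])
  notMem : ∀ v ∈ X, ∀ u ∈ l v, u ∉ X
  disjoint : (X : Set α).Pairwise (List.Disjoint on fun v => l v ++ [v])

theorem exists_isFan {P : Fin n → List α} (hP : ∀ i, IsWalk R A X (P i))
    (hdisj : Pairwise (List.Disjoint on P)) (hX : #X = n) : ∃ l, IsFan R A X l := by
  have hPX (i) : ∃ v ∈ X, v ∈ P i := by
    obtain ⟨v, hv, hvX⟩ := (hP i).getLast_mem
    exact ⟨v, hvX, List.mem_of_getLast? hv⟩
  obtain ⟨e, he⟩ := exists_equiv_mem_iff hdisj (by simpa using hX) hPX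
  have trim (v : X) : ∃ a, IsWalk R A {v.1} (a ++ [v.1]) ∧ (∀ u ∈ a, u ∉ X) ∧
      a ++ [v.1] ⊆ P (e.symm v) := by
    obtain ⟨a, w, hw, haw, haX, hsub⟩ := (hP (e.symm v)).exists_first_mem (hPX _)
    obtain rfl : ⟨w, hw⟩ = v := by simpa using (he (e.symm v) ⟨w, hw⟩).1 (hsub (by simp))
    exact ⟨a, haw, haX, hsub⟩
  choose l hl hlX hlP using trim
  classical
  refine ⟨fun v => if hv : v ∈ X then l ⟨v, hv⟩ else [], ?_, ?_, ?_⟩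
  · intro v hv
    simpa [hv] using hl ⟨v, hv⟩
  · intro v hv
    simpa [hv] using hlX ⟨v, hv⟩
  · intro v hv w hw hvw u huv huw
    simp only [mem_coe.1 hv, mem_coe.1 hw, dite_true] at huv huw
    refine hdisj (fun h => hvw ?_) (hlP ⟨v, hv⟩ huv) (hlP ⟨w, hw⟩ huw)
    exact congrArg Subtype.val (e.symm.injective h)

namespace IsFan

variable {l r : α → List α} {Y : Finset α}

theorem isWalk_reverse (hr : IsFan R.inv B Y r) (hw : w ∈ Y) :
    IsWalk R {w} B (w :: (r w).reverse) := by
  simpa using (hr.isWalk w hw).reverse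

theorem disjoint_reverse (hr : IsFan R.inv B Y r) :
    (Y : Set α).Pairwise (List.Disjoint on fun w => w :: (r w).reverse) :=
  fun _ hv _ hw hvw _ huv huw =>
    hr.disjoint hv hw hvw (by simpa [or_comm] using huv) (by simpa [or_comm] using huw)

theorem eq_of_mem_of_mem (hl : IsFan R A X l) (hr : IsFan R.inv B Y r)
    (hS : IsSeparator R A B S) (hSX : S ⊆ X) (hSY : S ⊆ Y) (hv : v ∈ X) (hw : w ∈ Y)
    (huv : u ∈ l v ++ [v]) (huw : u ∈ w :: (r w).reverse) : v = w :=
  hS.eq_of_mem_of_mem (hl.isWalk v hv) (fun z hz hzS => hl.notMem v hv z hz (hSX hzS))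
    (hr.isWalk_reverse hw)
    (fun z hz hzS => hr.notMem w hw z (List.mem_reverse.1 hz) (hSY hzS)) huv huw

theorem exists_glue [DecidableEq α] (hl : IsFan R A (insert x S) l)
    (hr : IsFan R.inv B (insert y S) r) (hS : IsSeparator R A B S) (hy : y ∉ S) :
    ∃ F : α → List α, (∀ v ∈ insert x S, IsWalk (insert (x, y) R) A B (F v)) ∧
      ((insert x S : Finset α) : Set α).Pairwise (List.Disjoint on F) := by
  -- The walk ending in `x` goes on along the arc to `y`, any other one from the vertex it ends in.
  let σ := Equiv.swap x y
  have σ_eq {v} (hv : v ∈ insert x S) (hvx : v ≠ x) : σ v = v :=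
    Equiv.swap_apply_of_ne_of_ne hvx (by grind)
  have σ_mem {v} (hv : v ∈ insert x S) : σ v ∈ insert y S := by
    obtain rfl | hvx := eq_or_ne v x
    · simp [σ]
    · grind
  have crossing {v w u} (hv : v ∈ insert x S) (hw : w ∈ insert x S) (huv : u ∈ l v ++ [v])
      (huw : u ∈ σ w :: (r (σ w)).reverse) : v = w := by
    have hvw : v = σ w := hl.eq_of_mem_of_mem hr hS (subset_insert x S) (subset_insert y S) hv
      (σ_mem hw) huv huw
    obtain rfl | hwx := eq_or_ne w x
    · have : v = y := by simpa [σ] using hvw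
      grind
    · rw [hvw, σ_eq hw hwx]
  have glue (v) (hv : v ∈ insert x S) : ∃ p, IsWalk (insert (x, y) R) A B p ∧
      p ⊆ (l v ++ [v]) ++ (σ v :: (r (σ v)).reverse) := by
    have hleft := (hl.isWalk v hv).mono (Set.subset_insert (x, y) R)
    have hright := (hr.isWalk_reverse (σ_mem hv)).mono (Set.subset_insert (x, y) R)
    obtain rfl | hvx := eq_or_ne v x
    · exact ⟨_, hleft.append_of_arc hright (by simp [σ]), by simp⟩
    · rw [σ_eq hv hvx] at hright ⊢
      exact ⟨_, hleft.splice hright, by simp⟩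
  choose! F hF hFsub using glue
  refine ⟨F, hF, fun v hv w hw hvw u huv huw => ?_⟩
  obtain huv | huv := List.mem_append.1 (hFsub v hv huv) <;>
    obtain huw | huw := List.mem_append.1 (hFsub w hw huw)
  · exact hl.disjoint hv hw hvw huv huw
  · exact hvw (crossing hv hw huv huw)
  · exact hvw (crossing hw hv huw huv).symm
  · exact hr.disjoint_reverse (σ_mem hv) (σ_mem hw) (σ.injective.ne hvw) huv huw

end IsFan

theorem isSeparator_empty_of_inter_subset (h : A ∩ B ⊆ S) : IsSeparator ∅ A B S := by
  rintro p ⟨hchain, ⟨v, hv, hvA⟩, w, hw, hwB⟩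
  match p, hchain with
  | [c], _ =>
    obtain rfl : c = v := by simpa using hv
    obtain rfl : c = w := by simpa using hw
    exact ⟨c, h ⟨hvA, hwB⟩, by simp⟩
  | _ :: _ :: _, hchain => simp at hchain

theorem exists_disjoint_walks_empty (h : ∀ S, IsSeparator ∅ A B S → n ≤ #S) :
    ∃ P : Fin n → List α, (∀ i, IsWalk ∅ A B (P i)) ∧ Pairwise (List.Disjoint on P) := by
  obtain ⟨T, hT, hTn⟩ : ∃ T : Finset α, ↑T ⊆ A ∩ B ∧ #T = n := by
    obtain hfin | hinf := (A ∩ B).finite_or_infinite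
    · obtain ⟨T, hT, hTn⟩ := exists_subset_card_eq
        (h hfin.toFinset (isSeparator_empty_of_inter_subset (by simp)))
      exact ⟨T, fun v hv => hfin.mem_toFinset.1 (hT hv), hTn⟩
    · exact hinf.exists_subset_card_eq n
  let e := (equivFinOfCardEq hTn).symm
  refine ⟨fun i => [↑(e i)], fun i => ?_, fun i j hij => ?_⟩
  · obtain ⟨hA, hB⟩ := hT (e i).2
    exact ⟨by simp, by simpa using hA, by simpa using hB⟩
  · simpa [Function.onFun, Subtype.ext_iff] using hij.symm

theorem exists_disjoint_walks (hR : R.Finite) (h : ∀ S, IsSeparator R A B S → n ≤ #S) :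
    ∃ P : Fin n → List α, (∀ i, IsWalk R A B (P i)) ∧ Pairwise (List.Disjoint on P) := by
  classical
  induction R, hR using Set.Finite.induction_on generalizing A B with
  | empty => exact exists_disjoint_walks_empty h
  | @insert arc R _ _ ih =>
    obtain ⟨x, y⟩ := arc
    by_cases hall : ∀ S, IsSeparator R A B S → n ≤ #S
    · obtain ⟨P, hP, hdisj⟩ := ih hall
      exact ⟨P, fun i => (hP i).mono (Set.subset_insert _ _), hdisj⟩
    push Not at hall
    obtain ⟨S, hS, hSn⟩ := hall
    have hX : IsSeparator (insert (x, y) R) A B (insert x S) := hS.insert_tail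
    have hY : IsSeparator (insert (x, y) R) A B (insert y S) := hS.insert_head
    have hX_card : #(insert x S) = n := ((card_insert_le x S).trans hSn).antisymm (h _ hX)
    have hY_card : #(insert y S) = n := ((card_insert_le y S).trans hSn).antisymm (h _ hY)
    have hy : y ∉ S := fun hy => by
      rw [insert_eq_of_mem hy] at hY_card
      exact hSn.ne hY_card
    obtain ⟨P, hP, hP_disj⟩ := ih fun T hT => h T (hX.of_tail_mem (mem_insert_self x S) hT)
    obtain ⟨Q, hQ, hQ_disj⟩ := ih fun T hT => h T (hY.of_head_mem (mem_insert_self y S) hT)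
    obtain ⟨l, hl⟩ := exists_isFan hP hP_disj hX_card
    obtain ⟨r, hr⟩ := exists_isFan (fun i => (hQ i).reverse) (fun i j hij => by
      simpa [Function.onFun] using hQ_disj hij) hY_card
    obtain ⟨F, hF, hF_disj⟩ := hl.exists_glue hr hS hy
    let e := (equivFinOfCardEq hX_card).symm
    exact ⟨fun i => F (e i), fun i => hF _ (e i).2, fun i j hij =>
      hF_disj (e i).2 (e j).2 (Subtype.val_injective.ne (e.injective.ne hij))⟩

theorem IsSeparator.exists_isWalk_of_unique (hsep : IsSeparator R A T S) (hp : IsWalk R A B p)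
    (hvT : v ∈ T) (hvp : v ∈ p) (huniq : ∀ z ∈ S, z ∈ p → z = u) : ∃ q, IsWalk R {u} {v} q := by
  obtain ⟨a, b, rfl⟩ := List.append_of_mem hvp
  have hav : IsWalk R A {v} (a ++ [v]) := hp.left_of_append
  obtain ⟨z, hzS, hz⟩ := hsep _ ⟨hav.isChain, hav.head_mem, v, by simp, hvT⟩
  obtain rfl := huniq z hzS (by grind)
  obtain ⟨c, d, hcd⟩ := List.append_of_mem hz
  exact ⟨z :: d, (hcd ▸ hav).right_of_append⟩

theorem IsSeparator.of_forall_exists_isWalk (hsep : IsSeparator R A B S)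
    (hanti : ∀ u v, (∃ q, IsWalk R {u} {v} q) → (∃ q, IsWalk R {v} {u} q) → u = v)
    (hT : ∀ v ∈ T, ∃ p, IsWalk R A B p ∧ v ∈ p ∧
      ∀ z ∈ S, z ∈ p → ∃ q, IsWalk R {z} {v} q) : IsSeparator R A T S := by
  intro q hq
  obtain ⟨a, v, hvT, rfl⟩ := hq.exists_concat
  obtain ⟨p, hp, hvp, hle⟩ := hT v hvT
  obtain ⟨c, b, rfl⟩ := List.append_of_mem hvp
  obtain ⟨z, hzS, hz⟩ := hsep _ (hq.splice hp.right_of_append)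
  obtain hza | hzb := List.mem_append.1 hz
  · exact ⟨z, hzS, List.mem_append_left _ hza⟩
  · obtain ⟨d, d', hd⟩ := List.append_of_mem hzb
    have hvz : IsWalk R {v} {z} (d ++ [z]) := (hd ▸ hp.right_of_append).left_of_append
    obtain rfl := hanti z v (hle z hzS (List.mem_append_right _ hzb)) ⟨_, hvz⟩
    exact ⟨z, hzS, by simp⟩

end Walks

section LineDigraph

variable {V E : Type*} {tl hd : E → V} {s t : V} {B C₁ C₂ : Finset E} {d e : E} {p : List E}

/-- The line digraph: its vertices are the edges, with an arc from `d` to `e` when `d` ends where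
`e` starts. -/
def lineDigraph (tl hd : E → V) : SetRel E E := {q | hd q.1 = tl q.2}

theorem isWalk_iff_pathFrom {B : Set E} : IsWalk (lineDigraph tl hd) {e | tl e = s} B p ↔
    PathFrom tl hd s p ∧ ∃ e ∈ p.getLast?, e ∈ B := by
  constructor
  · rintro ⟨hchain, ⟨d, hd, hds⟩, hlast⟩
    exact ⟨⟨by rintro rfl; simp at hd, hchain, fun e he => Option.mem_unique hd he ▸ hds⟩, hlast⟩
  · rintro ⟨⟨hne, hchain, hhead⟩, hlast⟩
    have hp := List.head?_eq_some_head hne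
    exact ⟨hchain, ⟨p.head hne, hp, hhead _ hp⟩, hlast⟩

theorem isWalk_iff_nPathFromTo :
    IsWalk (lineDigraph tl hd) {e | tl e = s} {e | hd e = t} p ↔ NPathFromTo tl hd s t p := by
  rw [isWalk_iff_pathFrom, NPathFromTo]
  refine and_congr_right fun ⟨hne, _⟩ => ?_
  simp [List.getLast?_eq_some_getLast hne]

theorem isSeparator_iff_separates :
    IsSeparator (lineDigraph tl hd) {e | tl e = s} C₂ C₁ ↔ Separates tl hd s C₂ C₁ := by
  simp only [IsSeparator, Separates, isWalk_iff_pathFrom, and_imp, mem_coe]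

theorem isSeparator_iff_nSeparates : IsSeparator (lineDigraph tl hd) {e | tl e = s}
    {e | hd e = t} B ↔ NSeparates tl hd s t B := by
  simp only [IsSeparator, NSeparates, isWalk_iff_nPathFromTo]

theorem exists_isWalk_iff_edgeLe :
    (∃ p, IsWalk (lineDigraph tl hd) {d} {e} p) ↔ EdgeLe tl hd d e := by
  refine exists_congr fun p => ⟨fun h => ⟨h.isChain, ?_, ?_⟩, fun ⟨hchain, hhead, hlast⟩ =>
    ⟨hchain, ⟨d, hhead, rfl⟩, e, hlast, rfl⟩⟩
  · simpa using h.head_mem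
  · simpa using h.getLast_mem

theorem Acyclic.edgeLe_antisymm (hacy : Acyclic tl hd) (hde : EdgeLe tl hd d e)
    (hed : EdgeLe tl hd e d) : d = e := by
  obtain ⟨p, hp⟩ := exists_isWalk_iff_edgeLe.2 hde
  obtain ⟨q, hq⟩ := exists_isWalk_iff_edgeLe.2 hed
  obtain ⟨p, _, rfl, rfl⟩ := hp.exists_concat
  obtain ⟨q, w, rfl, rfl⟩ := hq.exists_concat
  cases q with
  | nil => simpa using hq.head_mem
  | cons c q =>
    obtain rfl : c = _ := by simpa using hq.head_mem
    have hcycle : IsWalk (lineDigraph tl hd) {w} {w} ((p ++ c :: q) ++ [w]) := by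
      simpa using hp.splice hq
    have hne : p ++ c :: q ≠ [] := by simp
    have hhead : w ∈ (p ++ c :: q).head? := by simpa using hcycle.head_mem
    have hlast := List.getLast?_eq_some_getLast hne
    have hback : hd ((p ++ c :: q).getLast hne) = tl w :=
      hcycle.isChain.rel_getLast_head_of_append hne (by simp)
    exact absurd hback (hacy _ hne hcycle.isChain.left_of_append _ hhead _ hlast)

variable [Fintype E]

theorem exists_edgeDisjoint_nPathFromTo (tl hd : E → V) (s t : V) :
    ∃ P : Fin (nmincut tl hd s t) → List E,
      (∀ i, NPathFromTo tl hd s t (P i)) ∧ EdgeDisjoint P := by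
  obtain ⟨P, hP, hdisj⟩ := exists_disjoint_walks (lineDigraph tl hd).toFinite
    (n := nmincut tl hd s t) fun S hS => Nat.sInf_le ⟨S, isSeparator_iff_nSeparates.1 hS, rfl⟩
  exact ⟨P, fun i => isWalk_iff_nPathFromTo.1 (hP i), fun i j hij => hdisj hij⟩

variable {P : Fin (nmincut tl hd s t) → List E}

theorem IsNodeMinCut.exists_equiv_mem_iff (hB : IsNodeMinCut tl hd s t B)
    (hP : ∀ i, NPathFromTo tl hd s t (P i)) (hdisj : EdgeDisjoint P) :
    ∃ f : Fin (nmincut tl hd s t) ≃ B, ∀ i (e : B), ↑e ∈ P i ↔ e = f i :=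
  _root_.exists_equiv_mem_iff (fun i j hij => hdisj i j hij) (by simpa using hB.2)
    fun i => hB.1 _ (hP i)

theorem IsNodeMinCut.edgeLe_of_separates (h₁ : IsNodeMinCut tl hd s t C₁)
    (hsep : Separates tl hd s C₂ C₁) (hP : ∀ i, NPathFromTo tl hd s t (P i))
    (hdisj : EdgeDisjoint P) {i} (hdP : d ∈ P i) (heP : e ∈ P i) (hd₁ : d ∈ C₁) (he₂ : e ∈ C₂) :
    EdgeLe tl hd d e := by
  obtain ⟨f, hf⟩ := h₁.exists_equiv_mem_iff hP hdisj
  refine exists_isWalk_iff_edgeLe.1 <| (isSeparator_iff_separates.2 hsep).exists_isWalk_of_unique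
    (isWalk_iff_nPathFromTo.2 (hP i)) he₂ heP fun z hz hzP => ?_
  have hzd := ((hf i ⟨z, hz⟩).1 hzP).trans ((hf i ⟨d, hd₁⟩).1 hdP).symm
  exact congrArg Subtype.val hzd

theorem IsNodeMinCut.separates_of_edgeLe (hacy : Acyclic tl hd) (h₁ : NSeparates tl hd s t C₁)
    (h₂ : IsNodeMinCut tl hd s t C₂) (hP : ∀ i, NPathFromTo tl hd s t (P i))
    (hdisj : EdgeDisjoint P)
    (hle : ∀ i, ∀ d ∈ P i, ∀ e ∈ P i, d ∈ C₁ → e ∈ C₂ → EdgeLe tl hd d e) :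
    Separates tl hd s C₂ C₁ := by
  obtain ⟨f, hf⟩ := h₂.exists_equiv_mem_iff hP hdisj
  refine isSeparator_iff_separates.1 <|
    (isSeparator_iff_nSeparates.2 h₁).of_forall_exists_isWalk ?_ fun e he => ?_
  · simpa only [exists_isWalk_iff_edgeLe] using fun _ _ => hacy.edgeLe_antisymm
  · have heP : e ∈ P (f.symm ⟨e, he⟩) := by simp [hf _ ⟨e, he⟩]
    refine ⟨_, isWalk_iff_nPathFromTo.2 (hP _), heP, fun z hz hzP => ?_⟩
    exact exists_isWalk_iff_edgeLe.2 (hle _ z hzP e heP hz he)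

end LineDigraph

theorem cut_le_iff_exists_paths_general {V E : Type*} [Fintype E] (tl hd : E → V) (s t : V)
    (hacy : Acyclic tl hd) (CUT₁ CUT₂ : Finset E)
    (h₁ : IsNodeMinCut tl hd s t CUT₁) (h₂ : IsNodeMinCut tl hd s t CUT₂) :
    [Separates tl hd s CUT₂ CUT₁,
      ∃ P : Fin (nmincut tl hd s t) → List E,
        (∀ i, NPathFromTo tl hd s t (P i)) ∧ EdgeDisjoint P ∧
        (∀ i, ∀ e₁ ∈ P i, ∀ e₂ ∈ P i, e₁ ∈ CUT₁ → e₂ ∈ CUT₂ →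
          EdgeLe tl hd e₁ e₂),
      ∀ P : Fin (nmincut tl hd s t) → List E,
        (∀ i, NPathFromTo tl hd s t (P i)) → EdgeDisjoint P →
        (∀ i, ∀ e₁ ∈ P i, ∀ e₂ ∈ P i, e₁ ∈ CUT₁ → e₂ ∈ CUT₂ →
          EdgeLe tl hd e₁ e₂)].TFAE := by
  tfae_have 1 → 3 := fun hsep P hP hdisj i e₁ he₁ e₂ he₂ =>
    h₁.edgeLe_of_separates hsep hP hdisj he₁ he₂
  tfae_have 3 → 2 := fun hle =>
    let ⟨P, hP, hdisj⟩ := exists_edgeDisjoint_nPathFromTo tl hd s t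
    ⟨P, hP, hdisj, hle P hP hdisj⟩
  tfae_have 2 → 1 := fun ⟨_, hP, hdisj, hle⟩ => h₂.separates_of_edgeLe hacy h₁.1 hP hdisj hle
  tfae_finish

/-- `CUT₁ ≤ CUT₂` iff there exist `n = mincut(s,t)` edge-disjoint
paths from `s` to `t` on each of which the edge of `CUT₁` precedes (or equals)
the edge of `CUT₂`. -/
theorem cut_le_iff_exists_paths {V E : Type*} [Fintype E] (tl hd : E → V) (s t : V)
    (hacy : Acyclic tl hd) (hsrc : ∀ e : E, hd e ≠ s) (hts : t ≠ s)
    (CUT₁ CUT₂ : Finset E)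
    (h₁ : IsNodeMinCut tl hd s t CUT₁) (h₂ : IsNodeMinCut tl hd s t CUT₂) :
    Separates tl hd s CUT₂ CUT₁ ↔
      ∃ P : Fin (nmincut tl hd s t) → List E,
        (∀ i, NPathFromTo tl hd s t (P i)) ∧ EdgeDisjoint P ∧
        (∀ i, ∀ e₁ ∈ P i, ∀ e₂ ∈ P i, e₁ ∈ CUT₁ → e₂ ∈ CUT₂ →
          EdgeLe tl hd e₁ e₂) :=
  (cut_le_iff_exists_paths_general tl hd s t hacy CUT₁ CUT₂ h₁ h₂).out 0 1
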